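/- Let α be real with 0 < α < 2. Define J_α(k) = Σ_{n ∈ ℤ, n ≠ 0} e^{−i k n}/|n|^{α+1}. Then the infrared (long-wave) limit holds: lim_{k → 0⁺} (J_α(0) − J_α(k))/k^α = 2 ∫₀^∞ (1 − cos u)/u^{1+α} du = π / (Γ(α+1) sin(πα/2)). -/

import Mathlib

open Real Complex Filter MeasureTheory

/-- The lattice Fourier sum `J_α(k) = Σ_{n ∈ ℤ, n ≠ 0} e^{−i k n}/|n|^{α+1}`. -/
noncomputable def latticeJ (α k : ℝ) : ℂ :=
  ∑' n : {n : ℤ // n ≠ 0}, Complex.exp (-Complex.I * k * (n : ℤ)) / (|(n : ℝ)| ^ (α + 1) : ℝ)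

/-!
Pairing `±n` gives `J_α(0) - J_α(k) = 2 ∑_{n ≥ 1} (1 - cos kn) / n ^ (α + 1)`, and dividing by
`k ^ α` turns the right-hand side into `2 ∑_{n ≥ 1} k f(kn)`, where
`f(u) = (1 - cos u) / u ^ (1 + α)`: a Riemann sum of mesh `k`. Since `f` has an antitone
integrable majorant on `(0, ∞)`, the step functions behind these sums are uniformly dominated and
the sums converge to `2 ∫ f`.

To evaluate the integral, write `Γ(α + 1) / u ^ (1 + α) = ∫ t ^ α e ^ (-ut) dt` and integrate in `u`
first: the Laplace transform of `1 - cos` is `1 / (t (1 + t ^ 2))`, leaving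
`∫ t ^ (α - 1) / (1 + t ^ 2) dt`, which the reflection formula for `Γ` evaluates.
-/

open Set Topology

section RiemannSum

/-- The least point of the grid `h ℕ` that is at least `u`, for `0 < h`. Composing a function with
it gives the step function whose integral over `(0, ∞)` is the right Riemann sum of mesh `h`. -/
noncomputable def gridCeil (h u : ℝ) : ℝ := h * ⌈u / h⌉₊

variable {E : Type*} [NormedAddCommGroup E] {f : ℝ → E} {g : ℝ → ℝ} {h u : ℝ}

lemma le_gridCeil (hh : 0 < h) (u : ℝ) : u ≤ gridCeil h u := by
  rw [gridCeil, ← div_le_iff₀' hh]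
  exact Nat.le_ceil _

lemma gridCeil_lt_add (hh : 0 < h) (hu : 0 ≤ u) : gridCeil h u < u + h := by
  have hlt : h * ⌈u / h⌉₊ < h * (u / h + 1) := by
    gcongr
    exact Nat.ceil_lt_add_one (by positivity)
  rwa [mul_add_one, mul_div_cancel₀ _ hh.ne'] at hlt

lemma gridCeil_of_mem_Ioc (hh : 0 < h) {n : ℕ} (hu : u ∈ Ioc (h * n) (h * (n + 1 : ℕ))) :
    gridCeil h u = h * (n + 1 : ℕ) := by
  rw [gridCeil, (Nat.ceil_eq_iff n.succ_ne_zero).2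
    ⟨(lt_div_iff₀' hh).2 hu.1, (div_le_iff₀' hh).2 hu.2⟩]

lemma tendsto_gridCeil (hu : 0 ≤ u) : Tendsto (gridCeil · u) (𝓝[>] 0) (𝓝 u) := by
  have hupper : Tendsto (fun h : ℝ ↦ u + h) (𝓝[>] 0) (𝓝 u) :=
    tendsto_nhdsWithin_of_tendsto_nhds <| by
      simpa using (continuous_const_add u).tendsto 0
  refine tendsto_of_tendsto_of_tendsto_of_le_of_le' tendsto_const_nhds hupper ?_ ?_
  · filter_upwards [self_mem_nhdsWithin] with h hh using le_gridCeil hh u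
  · filter_upwards [self_mem_nhdsWithin] with h hh using (gridCeil_lt_add hh hu).le

lemma stronglyMeasurable_comp_gridCeil (f : ℝ → E) (h : ℝ) :
    StronglyMeasurable fun u ↦ f (gridCeil h u) :=
  (StronglyMeasurable.of_discrete (f := fun n : ℕ ↦ f (h * n))).comp_measurable
    (Nat.measurable_ceil.comp (measurable_id.div_const h))

lemma norm_comp_gridCeil_le (hg : AntitoneOn g (Ioi 0)) (hfg : ∀ u > 0, ‖f u‖ ≤ g u)
    (hh : 0 < h) (hu : 0 < u) : ‖f (gridCeil h u)‖ ≤ g u :=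
  have hle := le_gridCeil hh u
  (hfg _ (hu.trans_le hle)).trans (hg hu (hu.trans_le hle) hle)

lemma integrableOn_comp_gridCeil (hg : AntitoneOn g (Ioi 0)) (hgi : IntegrableOn g (Ioi 0))
    (hfg : ∀ u > 0, ‖f u‖ ≤ g u) (hh : 0 < h) :
    IntegrableOn (fun u ↦ f (gridCeil h u)) (Ioi 0) :=
  hgi.mono' (stronglyMeasurable_comp_gridCeil f h).aestronglyMeasurable <|
    ae_restrict_of_forall_mem measurableSet_Ioi fun _ hu ↦ norm_comp_gridCeil_le hg hfg hh hu

variable [NormedSpace ℝ E]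

lemma tendsto_setIntegral_comp_gridCeil (hf : ContinuousOn f (Ioi 0))
    (hg : AntitoneOn g (Ioi 0)) (hgi : IntegrableOn g (Ioi 0)) (hfg : ∀ u > 0, ‖f u‖ ≤ g u) :
    Tendsto (fun h ↦ ∫ u in Ioi 0, f (gridCeil h u)) (𝓝[>] 0) (𝓝 (∫ u in Ioi 0, f u)) := by
  refine tendsto_integral_filter_of_dominated_convergence g ?_ ?_ hgi ?_
  · exact .of_forall fun h ↦ (stronglyMeasurable_comp_gridCeil f h).aestronglyMeasurable
  · filter_upwards [self_mem_nhdsWithin] with h hh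
    exact ae_restrict_of_forall_mem measurableSet_Ioi fun u hu ↦
      norm_comp_gridCeil_le hg hfg hh hu
  · exact ae_restrict_of_forall_mem measurableSet_Ioi fun u hu ↦
      (hf.continuousAt (Ioi_mem_nhds hu)).tendsto.comp (tendsto_gridCeil (le_of_lt hu))

variable [CompleteSpace E]

lemma hasSum_setIntegral_comp_gridCeil (hh : 0 < h)
    (hf : IntegrableOn (fun u ↦ f (gridCeil h u)) (Ioi 0)) :
    HasSum (fun n : ℕ ↦ h • f (h * (n + 1 : ℕ))) (∫ u in Ioi 0, f (gridCeil h u)) := by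
  have hmono : Monotone fun n : ℕ ↦ h * (n : ℝ) := fun m n hmn ↦
    mul_le_mul_of_nonneg_left (Nat.cast_le.2 hmn) hh.le
  have hunbdd : ¬ BddAbove (range fun n : ℕ ↦ h * (n : ℝ)) :=
    not_bddAbove_of_tendsto_atTop (tendsto_natCast_atTop_atTop.const_mul_atTop hh)
  have hunion : ⋃ n : ℕ, Ioc (h * n) (h * (n + 1 : ℕ)) = Ioi 0 := by
    simpa using iUnion_Ioc_map_succ_eq_Ioi (fun n ↦ hmono (Nat.zero_le n)) hunbdd
  have hcell (n : ℕ) :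
      ∫ u in Ioc (h * n) (h * (n + 1 : ℕ)), f (gridCeil h u) = h • f (h * (n + 1 : ℕ)) := by
    rw [setIntegral_congr_fun measurableSet_Ioc fun u hu ↦
        congrArg f (gridCeil_of_mem_Ioc hh hu), setIntegral_const,
      Real.volume_real_Ioc_of_le (hmono n.le_succ)]
    congr 1
    push_cast
    ring
  simp_rw [← hcell, ← hunion]
  exact hasSum_integral_iUnion (fun _ ↦ measurableSet_Ioc) hmono.pairwise_disjoint_on_Ioc_succ
    (hunion ▸ hf)

theorem tendsto_tsum_smul_setIntegral_Ioi (hf : ContinuousOn f (Ioi 0))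
    (hg : AntitoneOn g (Ioi 0)) (hgi : IntegrableOn g (Ioi 0)) (hfg : ∀ u > 0, ‖f u‖ ≤ g u) :
    Tendsto (fun h : ℝ ↦ ∑' n : ℕ, h • f (h * (n + 1 : ℕ))) (𝓝[>] 0)
      (𝓝 (∫ u in Ioi 0, f u)) := by
  refine (tendsto_setIntegral_comp_gridCeil hf hg hgi hfg).congr' ?_
  filter_upwards [self_mem_nhdsWithin] with h hh
  exact (hasSum_setIntegral_comp_gridCeil hh
    (integrableOn_comp_gridCeil hg hgi hfg hh)).tsum_eq.symm

end RiemannSum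

section Integrand

variable {α s u : ℝ}

lemma integrableOn_Ioi_min_rpow {a b : ℝ} (ha : -1 < a) (hb : b < -1) :
    IntegrableOn (fun u : ℝ ↦ min (u ^ a) (u ^ b)) (Ioi 0) := by
  have hmeas : Measurable fun u : ℝ ↦ min (u ^ a) (u ^ b) := by fun_prop
  have hnonneg {u : ℝ} (hu : 0 < u) : 0 ≤ min (u ^ a) (u ^ b) := by positivity
  rw [← Ioc_union_Ioi_eq_Ioi (zero_le_one' ℝ)]
  refine .union ?_ ?_
  · have hnear : IntegrableOn (fun u : ℝ ↦ u ^ a) (Ioc 0 1) :=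
      (intervalIntegrable_iff_integrableOn_Ioc_of_le zero_le_one).1
        (intervalIntegral.intervalIntegrable_rpow' ha)
    refine hnear.mono' hmeas.aestronglyMeasurable ?_
    refine ae_restrict_of_forall_mem measurableSet_Ioc fun u hu ↦ ?_
    rw [Real.norm_of_nonneg (hnonneg hu.1)]
    exact min_le_left _ _
  · refine (integrableOn_Ioi_rpow_of_lt hb one_pos).mono' hmeas.aestronglyMeasurable ?_
    refine ae_restrict_of_forall_mem measurableSet_Ioi fun u hu ↦ ?_
    rw [Real.norm_of_nonneg (hnonneg (one_pos.trans hu))]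
    exact min_le_right _ _

lemma one_sub_cos_le_two_mul_rpow (hs0 : 0 ≤ s) (hs2 : s ≤ 2) (hu : 0 < u) :
    1 - Real.cos u ≤ 2 * u ^ s := by
  rcases le_total u 1 with hu1 | hu1
  · have hcos := Real.one_sub_sq_div_two_le_cos (x := u)
    have hpow : u ^ 2 ≤ u ^ s := by
      simpa only [Real.rpow_two] using Real.rpow_le_rpow_of_exponent_ge hu hu1 hs2
    nlinarith [sq_nonneg u]
  · linarith [Real.neg_one_le_cos u, Real.one_le_rpow hu1 hs0]

lemma one_sub_cos_div_rpow_le (hs0 : 0 ≤ s) (hs2 : s ≤ 2) (hu : 0 < u) :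
    (1 - Real.cos u) / u ^ (1 + α) ≤ 2 * u ^ (s - (1 + α)) := by
  rw [Real.rpow_sub hu, ← mul_div_assoc]
  gcongr
  exact one_sub_cos_le_two_mul_rpow hs0 hs2 hu

lemma one_sub_cos_div_rpow_nonneg (α : ℝ) (hu : 0 ≤ u) :
    0 ≤ (1 - Real.cos u) / u ^ (1 + α) :=
  div_nonneg (sub_nonneg.2 (Real.cos_le_one u)) (by positivity)

lemma continuousOn_one_sub_cos_div_rpow (α : ℝ) :
    ContinuousOn (fun u : ℝ ↦ (1 - Real.cos u) / u ^ (1 + α)) (Ioi 0) :=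
  fun u (hu : 0 < u) ↦ ContinuousAt.continuousWithinAt <|
    .div (by fun_prop) (Real.continuousAt_rpow_const _ _ (.inl hu.ne')) (by positivity)

/-- An antitone majorant of `(1 - cos u) / u ^ (1 + α)` on `(0, ∞)`, integrable for `0 < α < 2`.
Near `0`, where `1 - cos u` is of order `u ^ 2`, the exponent may be anything in
`(-1, min 0 (1 - α)]`; `-α / 2` is such a choice. -/
noncomputable def oneSubCosMajorant (α u : ℝ) : ℝ := 2 * min (u ^ (-α / 2)) (u ^ (-(1 + α)))

lemma norm_one_sub_cos_div_rpow_le (hα0 : 0 < α) (hα2 : α < 2) (hu : 0 < u) :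
    ‖(1 - Real.cos u) / u ^ (1 + α)‖ ≤ oneSubCosMajorant α u := by
  rw [Real.norm_of_nonneg (one_sub_cos_div_rpow_nonneg α hu.le), oneSubCosMajorant,
    mul_min_of_nonneg _ _ zero_le_two]
  refine le_min ?_ ?_
  · rw [show -α / 2 = 1 + α / 2 - (1 + α) by ring]
    exact one_sub_cos_div_rpow_le (by linarith) (by linarith) hu
  · simpa only [zero_sub] using one_sub_cos_div_rpow_le (α := α) le_rfl zero_le_two hu

lemma antitoneOn_oneSubCosMajorant (hα : 0 ≤ α) : AntitoneOn (oneSubCosMajorant α) (Ioi 0) :=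
  have hnear := Real.antitoneOn_rpow_Ioi_of_exponent_nonpos (r := -α / 2) (by linarith)
  have hfar := Real.antitoneOn_rpow_Ioi_of_exponent_nonpos (r := -(1 + α)) (by linarith)
  fun _ hu _ hv huv ↦ mul_le_mul_of_nonneg_left (hnear.inf hfar hu hv huv) zero_le_two

lemma integrableOn_oneSubCosMajorant (hα0 : 0 < α) (hα2 : α < 2) :
    IntegrableOn (oneSubCosMajorant α) (Ioi 0) :=
  (integrableOn_Ioi_min_rpow (by linarith) (by linarith)).const_mul 2

lemma integrableOn_one_sub_cos_div_rpow (hα0 : 0 < α) (hα2 : α < 2) :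
    IntegrableOn (fun u : ℝ ↦ (1 - Real.cos u) / u ^ (1 + α)) (Ioi 0) :=
  (integrableOn_oneSubCosMajorant hα0 hα2).mono'
    ((continuousOn_one_sub_cos_div_rpow α).aestronglyMeasurable measurableSet_Ioi)
    (ae_restrict_of_forall_mem measurableSet_Ioi fun _ hu ↦
      norm_one_sub_cos_div_rpow_le hα0 hα2 hu)

end Integrand

section MellinIntegrals

lemma integral_integral_swap_of_nonneg {X Y : Type*} [MeasurableSpace X] [MeasurableSpace Y]
    {μ : Measure X} {ν : Measure Y} [SFinite μ] [SFinite ν] {F : X → Y → ℝ}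
    (hF : AEStronglyMeasurable (Function.uncurry F) (μ.prod ν))
    (hF0 : ∀ᵐ x ∂μ, ∀ᵐ y ∂ν, 0 ≤ F x y) (hFx : ∀ᵐ x ∂μ, Integrable (F x) ν)
    (hFi : Integrable (fun x ↦ ∫ y, F x y ∂ν) μ) :
    ∫ x, ∫ y, F x y ∂ν ∂μ = ∫ y, ∫ x, F x y ∂μ ∂ν := by
  refine integral_integral_swap ((integrable_prod_iff hF).2 ⟨hFx, hFi.congr ?_⟩)
  filter_upwards [hF0] with x hx
  exact integral_congr_ae (hx.mono fun y hy ↦ (Real.norm_of_nonneg hy).symm)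

lemma integrableOn_rpow_mul_exp_neg_mul_Ioi {a r : ℝ} (ha : 0 < a) (hr : 0 < r) :
    IntegrableOn (fun t : ℝ ↦ t ^ (a - 1) * Real.exp (-(r * t))) (Ioi 0) := by
  simpa only [Real.rpow_one, neg_mul] using
    integrableOn_rpow_mul_exp_neg_mul_rpow (by linarith) one_pos hr

lemma integral_exp_neg_mul_Ioi {r : ℝ} (hr : 0 < r) :
    ∫ t in Ioi 0, Real.exp (-(r * t)) = 1 / r := by
  simpa [neg_div_neg_eq] using integral_exp_mul_Ioi (neg_lt_zero.2 hr) 0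

lemma integral_rpow_sub_one_div_one_add {a : ℝ} (ha0 : 0 < a) (ha1 : a < 1) :
    ∫ x in Ioi (0 : ℝ), x ^ (a - 1) / (1 + x) = π / Real.sin (π * a) := by
  let F (s x : ℝ) : ℝ := x ^ (a - 1) * Real.exp (-((1 + x) * s))
  have hsplit (s x : ℝ) : F s x = Real.exp (-s) * (x ^ (a - 1) * Real.exp (-(s * x))) := by
    rw [mul_left_comm, ← Real.exp_add, show -s + -(s * x) = -((1 + x) * s) by ring]
  have hinner_x {s : ℝ} (hs : s ∈ Ioi 0) :
      ∫ x in Ioi 0, F s x = Real.Gamma a * (Real.exp (-s) * s ^ (1 - a - 1)) := by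
    simp_rw [hsplit]
    rw [integral_const_mul, Real.integral_rpow_mul_exp_neg_mul_Ioi ha0 hs, one_div,
      Real.inv_rpow (le_of_lt hs), ← Real.rpow_neg (le_of_lt hs)]
    ring_nf
  have hinner_s {x : ℝ} (hx : x ∈ Ioi 0) : ∫ s in Ioi 0, F s x = x ^ (a - 1) / (1 + x) := by
    rw [integral_const_mul, integral_exp_neg_mul_Ioi (add_pos one_pos hx), mul_one_div]
  have hswap : ∫ s in Ioi 0, ∫ x in Ioi 0, F s x = ∫ x in Ioi 0, ∫ s in Ioi 0, F s x := by
    refine integral_integral_swap_of_nonneg ?_ ?_ ?_ ?_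
    · exact Measurable.aestronglyMeasurable (by unfold F Function.uncurry; fun_prop)
    · exact .of_forall fun s ↦ ae_restrict_of_forall_mem measurableSet_Ioi fun x hx ↦
        mul_nonneg (Real.rpow_nonneg (le_of_lt hx) _) (Real.exp_nonneg _)
    · refine ae_restrict_of_forall_mem measurableSet_Ioi fun s hs ↦ ?_
      simp_rw [funext (hsplit s)]
      exact (integrableOn_rpow_mul_exp_neg_mul_Ioi ha0 hs).const_mul _
    · exact IntegrableOn.congr_fun
        ((Real.GammaIntegral_convergent (sub_pos.2 ha1)).const_mul (Real.Gamma a))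
        (fun s hs ↦ (hinner_x hs).symm) measurableSet_Ioi
  rw [← setIntegral_congr_fun measurableSet_Ioi fun x hx ↦ hinner_s hx, ← hswap,
    setIntegral_congr_fun measurableSet_Ioi fun s hs ↦ hinner_x hs, integral_const_mul,
    ← Real.Gamma_eq_integral (sub_pos.2 ha1), Real.Gamma_mul_Gamma_one_sub]

lemma integral_rpow_sub_one_div_one_add_sq {a : ℝ} (ha0 : 0 < a) (ha2 : a < 2) :
    ∫ x in Ioi (0 : ℝ), x ^ (a - 1) / (1 + x ^ 2) = π / (2 * Real.sin (π * a / 2)) := by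
  have hsubst : ∫ x in Ioi (0 : ℝ), 2 * (x ^ (a - 1) / (1 + x ^ 2)) =
      ∫ x in Ioi (0 : ℝ), x ^ (a / 2 - 1) / (1 + x) := by
    rw [← integral_comp_rpow_Ioi_of_pos (g := fun x ↦ x ^ (a / 2 - 1) / (1 + x)) two_pos]
    refine setIntegral_congr_fun measurableSet_Ioi fun x hx ↦ ?_
    have hpow : x ^ (2 - 1 : ℝ) * (x ^ (2 : ℝ)) ^ (a / 2 - 1) = x ^ (a - 1) := by
      rw [← Real.rpow_mul (le_of_lt hx), ← Real.rpow_add hx]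
      ring_nf
    rw [smul_eq_mul, ← hpow, Real.rpow_two]
    ring
  rw [integral_const_mul, integral_rpow_sub_one_div_one_add (by linarith) (by linarith)] at hsubst
  rw [mul_comm 2, ← div_div, mul_div_assoc π a 2, ← hsubst, mul_div_cancel_left₀ _ two_ne_zero]

end MellinIntegrals

section CosineIntegral

variable {α t : ℝ}

lemma cos_mul_exp_neg_mul_eq_re (t u : ℝ) :
    Real.cos u * Real.exp (-(t * u)) = (Complex.exp ((-t + I) * u)).re := by
  simp [Complex.exp_re, mul_comm]

lemma integrableOn_cos_mul_exp_neg_mul_Ioi (ht : 0 < t) :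
    IntegrableOn (fun u ↦ Real.cos u * Real.exp (-(t * u))) (Ioi 0) := by
  simp_rw [cos_mul_exp_neg_mul_eq_re]
  exact (integrableOn_exp_mul_complex_Ioi (a := -t + I) (by simpa using ht) 0).re

lemma integral_cos_mul_exp_neg_mul_Ioi (ht : 0 < t) :
    ∫ u in Ioi 0, Real.cos u * Real.exp (-(t * u)) = t / (1 + t ^ 2) := by
  have hre : (-t + I : ℂ).re < 0 := by simpa using ht
  have hnormSq : Complex.normSq (-t + I) = 1 + t ^ 2 := by
    simpa [add_comm] using Complex.normSq_add_mul_I (-t) 1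
  simp_rw [cos_mul_exp_neg_mul_eq_re]
  refine (integral_re (integrableOn_exp_mul_complex_Ioi hre 0)).trans ?_
  rw [integral_exp_mul_complex_Ioi hre, Complex.ofReal_zero, mul_zero, Complex.exp_zero, neg_div,
    one_div, RCLike.re_to_complex, Complex.neg_re, Complex.inv_re, hnormSq]
  simp [neg_div]

lemma integral_one_sub_cos_mul_exp_neg_mul_Ioi (ht : 0 < t) :
    ∫ u in Ioi 0, (1 - Real.cos u) * Real.exp (-(t * u)) = 1 / (t * (1 + t ^ 2)) := by
  have hexp : IntegrableOn (fun u ↦ Real.exp (-(t * u))) (Ioi 0) := by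
    simpa only [neg_mul] using integrableOn_exp_mul_Ioi (neg_lt_zero.2 ht) 0
  simp_rw [sub_mul, one_mul]
  rw [integral_sub hexp (integrableOn_cos_mul_exp_neg_mul_Ioi ht), integral_exp_neg_mul_Ioi ht,
    integral_cos_mul_exp_neg_mul_Ioi ht]
  field_simp
  ring

theorem integral_one_sub_cos_div_rpow (hα0 : 0 < α) (hα2 : α < 2) :
    ∫ u in Ioi (0 : ℝ), (1 - Real.cos u) / u ^ (1 + α) =
      π / (2 * Real.sin (π * α / 2)) / Real.Gamma (α + 1) := by
  have hα1 : 0 < α + 1 := by linarith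
  let F (u t : ℝ) : ℝ := (1 - Real.cos u) * (t ^ (α + 1 - 1) * Real.exp (-(u * t)))
  have hinner_t {u : ℝ} (hu : u ∈ Ioi 0) :
      ∫ t in Ioi 0, F u t = (1 - Real.cos u) / u ^ (1 + α) * Real.Gamma (α + 1) := by
    rw [integral_const_mul, Real.integral_rpow_mul_exp_neg_mul_Ioi hα1 hu,
      Real.div_rpow zero_le_one (le_of_lt hu), Real.one_rpow, add_comm 1 α]
    ring
  have hinner_u {t : ℝ} (ht : t ∈ Ioi 0) : ∫ u in Ioi 0, F u t = t ^ (α - 1) / (1 + t ^ 2) := by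
    have ht0 : t ≠ 0 := ne_of_gt ht
    have hF (u : ℝ) : F u t = t ^ α * ((1 - Real.cos u) * Real.exp (-(t * u))) := by
      rw [mul_left_comm, mul_comm t u, ← add_sub_cancel_right α 1]
    simp_rw [hF]
    rw [integral_const_mul, integral_one_sub_cos_mul_exp_neg_mul_Ioi ht,
      Real.rpow_sub_one ht0]
    field_simp
  have hswap : ∫ u in Ioi 0, ∫ t in Ioi 0, F u t = ∫ t in Ioi 0, ∫ u in Ioi 0, F u t := by
    refine integral_integral_swap_of_nonneg ?_ ?_ ?_ ?_
    · exact Measurable.aestronglyMeasurable (by unfold F Function.uncurry; fun_prop)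
    · exact .of_forall fun u ↦ ae_restrict_of_forall_mem measurableSet_Ioi fun t ht ↦
        mul_nonneg (sub_nonneg.2 (Real.cos_le_one u))
          (mul_nonneg (Real.rpow_nonneg (le_of_lt ht) _) (Real.exp_nonneg _))
    · exact ae_restrict_of_forall_mem measurableSet_Ioi fun u hu ↦
        (integrableOn_rpow_mul_exp_neg_mul_Ioi hα1 hu).const_mul _
    · exact IntegrableOn.congr_fun
        ((integrableOn_one_sub_cos_div_rpow hα0 hα2).mul_const (Real.Gamma (α + 1)))
        (fun u hu ↦ (hinner_t hu).symm) measurableSet_Ioi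
  rw [setIntegral_congr_fun measurableSet_Ioi fun u hu ↦ hinner_t hu, integral_mul_const,
    setIntegral_congr_fun measurableSet_Ioi fun t ht ↦ hinner_u ht,
    integral_rpow_sub_one_div_one_add_sq hα0 hα2] at hswap
  exact eq_div_of_mul_eq (Real.Gamma_pos_of_pos hα1).ne' hswap

end CosineIntegral

section LatticeSum

variable {α : ℝ}

lemma latticeJ_eq_two_mul_cosZeta (hα : 0 < α) (k : ℝ) :
    latticeJ α k = 2 * HurwitzZeta.cosZeta (k / (2 * π) : ℝ) (α + 1 : ℝ) := by
  let c (n : ℤ) : ℂ := Complex.exp (-I * k * n) / (|(n : ℝ)| ^ (α + 1) : ℝ)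
  have hzero : c 0 = 0 := by simp [c, Real.zero_rpow (by linarith : α + 1 ≠ 0)]
  have hsupp : Function.support c ⊆ {n : ℤ | n ≠ 0} := fun n hn hn0 ↦ hn (hn0 ▸ hzero)
  have hcos := (HurwitzZeta.hasSum_int_cosZeta (-(k / (2 * π))) (s := (α + 1 : ℝ))
    (by simpa using hα)).mul_left 2
  rw [AddCircle.coe_neg, HurwitzZeta.cosZeta_neg] at hcos
  rw [← hcos.tsum_eq]
  refine (tsum_subtype_eq_of_support_subset hsupp).trans (tsum_congr fun n ↦ ?_)
  have hphase : 2 * π * I * (-(k / (2 * π)) : ℝ) * n = -I * k * n := by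
    push_cast
    field_simp
  rw [hphase, mul_div_cancel₀ _ (two_ne_zero' ℂ)]
  simp only [c]
  rw [Complex.ofReal_cpow (abs_nonneg _), ← Int.cast_abs, Complex.ofReal_intCast]

lemma hasSum_latticeJ (hα : 0 < α) (k : ℝ) :
    HasSum (fun n : ℕ ↦ ((2 * (Real.cos (k * n) / n ^ (α + 1)) : ℝ) : ℂ)) (latticeJ α k) := by
  rw [latticeJ_eq_two_mul_cosZeta hα]
  refine ((HurwitzZeta.hasSum_nat_cosZeta (k / (2 * π)) (s := (α + 1 : ℝ))
    (by simpa using hα)).mul_left 2).congr_fun fun n ↦ ?_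
  rw [mul_div_cancel₀ _ two_pi_pos.ne']
  push_cast [Complex.ofReal_cpow (Nat.cast_nonneg n)]
  rfl

lemma latticeJ_zero_sub (hα : 0 < α) (k : ℝ) :
    latticeJ α 0 - latticeJ α k =
      (2 * ∑' n : ℕ, (1 - Real.cos (k * (n + 1 : ℕ))) / (n + 1 : ℕ) ^ (α + 1) : ℝ) := by
  have hdiff := (hasSum_nat_add_iff' 1).2 ((hasSum_latticeJ hα 0).sub (hasSum_latticeJ hα k))
  simp only [Finset.sum_range_one, Nat.cast_zero, mul_zero, sub_self, sub_zero] at hdiff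
  rw [← hdiff.tsum_eq, ← tsum_mul_left, Complex.ofReal_tsum]
  refine tsum_congr fun n ↦ ?_
  rw [← Complex.ofReal_sub, zero_mul, Real.cos_zero]
  congr 1
  ring

lemma latticeJ_zero_sub_div_rpow (hα : 0 < α) {k : ℝ} (hk : 0 < k) :
    (latticeJ α 0 - latticeJ α k) / ((k ^ α : ℝ) : ℂ) =
      (2 * ∑' n : ℕ, k • ((1 - Real.cos (k * (n + 1 : ℕ))) / (k * (n + 1 : ℕ)) ^ (1 + α)) : ℝ) := by
  rw [latticeJ_zero_sub hα, ← Complex.ofReal_div, mul_div_assoc, ← tsum_div_const]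
  congr 3 with n
  have hkα : k ^ α ≠ 0 := by positivity
  rw [Real.mul_rpow hk.le (by positivity), add_comm 1 α, Real.rpow_add_one hk.ne', smul_eq_mul]
  field_simp

end LatticeSum

/-- Let `α` be real with `0 < α < 2`. Then the infrared (long-wave) limit
holds: `lim_{k → 0⁺} (J_α(0) − J_α(k))/k^α = 2 ∫₀^∞ (1 − cos u)/u^{1+α} du
= π / (Γ(α+1) sin(πα/2))`. -/
theorem infrared_limit (α : ℝ) (hα0 : 0 < α) (hα2 : α < 2) :
    Tendsto (fun k : ℝ => (latticeJ α 0 - latticeJ α k) / ((k ^ α : ℝ) : ℂ))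
      (nhdsWithin 0 (Set.Ioi 0))
      (nhds ((2 * ∫ u in Set.Ioi (0 : ℝ), (1 - Real.cos u) / u ^ (1 + α) : ℝ) : ℂ)) ∧
    (2 * ∫ u in Set.Ioi (0 : ℝ), (1 - Real.cos u) / u ^ (1 + α) : ℝ) =
      π / (Real.Gamma (α + 1) * Real.sin (π * α / 2)) := by
  constructor
  · have hriemann := tendsto_tsum_smul_setIntegral_Ioi (continuousOn_one_sub_cos_div_rpow α)
      (antitoneOn_oneSubCosMajorant hα0.le) (integrableOn_oneSubCosMajorant hα0 hα2)
      fun u hu ↦ norm_one_sub_cos_div_rpow_le hα0 hα2 hu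
    refine ((Complex.continuous_ofReal.tendsto _).comp (hriemann.const_mul 2)).congr' ?_
    filter_upwards [self_mem_nhdsWithin] with k hk
    exact (latticeJ_zero_sub_div_rpow hα0 hk).symm
  · rw [integral_one_sub_cos_div_rpow hα0 hα2]
    field_simp
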